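/- arXiv:2105.10766 — 3 statements merged into one kernel-verified Lean document; each statement's English description precedes it below -/
import Mathlib

section
/- Let g be a compactly driven system with the USP. Define E_n(←u) = φ_ū(0,−n,X) for any ū ∈ U^ℤ whose left-infinite part is ←u. Then E_n converges to E uniformly on ←U: for every ε > 0 there exists N ∈ ℕ such that d_H(E_n(←u), E(←u)) < ε for all ←u ∈ ←U and all n ≥ N. -/
open Metric Set Filter Topology Function

universe u' v'

variable {U : Type u'} {X : Type v'}

/-- `proc g u j m x = φ_ū(m+j, m, x)`: apply `g_{u m}, g_{u (m+1)}, …, g_{u (m+j-1)}`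
to `x`, in that order. -/
def proc (g : U → X → X) (u : ℤ → U) : ℕ → ℤ → X → X
  | 0, _, x => x
  | j + 1, m, x => g (u (m + j)) (proc g u j m x)

/-- A solution of the driven system `g` for the input `u`. -/
def IsSolution (g : U → X → X) (u : ℤ → U) (x : ℤ → X) : Prop :=
  ∀ n : ℤ, x (n + 1) = g (u n) (x n)

/-- The unique solution property: every input has exactly one solution. -/
def USP (g : U → X → X) : Prop :=
  ∀ u : ℤ → U, ∃! x : ℤ → X, IsSolution g u x

/-- The set of reachable states at time `n`: `X_n(ū) = ⋂_{j ≥ 1} φ_ū(n, n - j, X)`. -/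
def reach (g : U → X → X) (u : ℤ → U) (n : ℤ) : Set X :=
  ⋂ j : ℕ, Set.range (proc g u (j + 1) (n - (j + 1)))

/-- The reachable set `X_U = ⋃ {X_n(ū) : n ∈ ℤ, ū ∈ U^ℤ}`. -/
def reachSet (g : U → X → X) : Set X :=
  ⋃ u : ℤ → U, ⋃ n : ℤ, reach g u n

/-- The left-infinite part `←u^n = (…, u_{n-2}, u_{n-1})` of an input `u`;
coordinate `k : ℕ` corresponds to time `n - 1 - k` (so `0` is the most recent one). -/
def leftOf (u : ℤ → U) (n : ℤ) : ℕ → U := fun k => u (n - 1 - (k : ℤ))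

/-- The right-shift map `r : (…, u_{-2}, u_{-1}) ↦ (…, u_{-3}, u_{-2})`. -/
def shift (w : ℕ → U) : ℕ → U := fun k => w (k + 1)

/-- The concatenation map `σ_v : (…, u_{-2}, u_{-1}) ↦ (…, u_{-2}, u_{-1}, v)`. -/
def append (v : U) (w : ℕ → U) : ℕ → U := fun k => Nat.casesOn k v w

/-- `encProc g w j = φ_ū(0, -j, ·)` for any input `ū` whose left-infinite part is `w`. -/
def encProc (g : U → X → X) : (ℕ → U) → ℕ → X → X
  | _, 0, x => x
  | w, j + 1, x => g (w 0) (encProc g (shift w) j x)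

/-- The encoding map `E(←u) = X_0(ū) = ⋂_{j ≥ 1} φ_ū(0, -j, X)`. -/
def enc (g : U → X → X) (w : ℕ → U) : Set X :=
  ⋂ j : ℕ, Set.range (encProc g w (j + 1))

/-- The map `g̃_v : (…, x_{-2}, x_{-1}) ↦ (…, x_{-2}, x_{-1}, g(v, x_{-1}))`. -/
def tildeg (g : U → X → X) (v : U) (x : ℕ → X) : ℕ → X :=
  fun k => Nat.casesOn k (g v (x 0)) x

/-- The Hausdorff semi-distance `dist(A, B) = sup_{a ∈ A} inf_{b ∈ B} d(a, b)`. -/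
noncomputable def semiDist [MetricSpace X] (A B : Set X) : ℝ :=
  sSup ((fun a => Metric.infDist a B) '' A)

theorem encProc_succ' (g : U → X → X) (n : ℕ) : ∀ (w : ℕ → U) (x : X),
    encProc g w (n + 1) x = encProc g w n (g (w n) x) := by
  induction n with
  | zero => intro w x; rfl
  | succ n ih =>
    intro w x
    change g (w 0) (encProc g (shift w) (n + 1) x) = g (w 0) (encProc g (shift w) n (g (w (n+1)) x))
    rw [ih]; rfl

theorem range_encProc_antitone (g : U → X → X) (w : ℕ → U) :
    Antitone fun n => Set.range (encProc g w n) := by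
  refine antitone_nat_of_succ_le fun n => ?_
  rintro _ ⟨x, rfl⟩
  exact ⟨_, (encProc_succ' g n w x).symm⟩

theorem mem_enc_iff (g : U → X → X) (w : ℕ → U) (a : X) :
    a ∈ enc g w ↔ ∀ n, a ∈ Set.range (encProc g w n) := by
  constructor
  · intro h n
    exact range_encProc_antitone g w (Nat.le_succ n) (mem_iInter.1 h n)
  · intro h
    exact mem_iInter.2 fun n => h (n + 1)

theorem encProc_continuous [MetricSpace X] [MetricSpace U]
    (g : U → X → X) (hg : Continuous fun p : U × X => g p.1 p.2) (n : ℕ) :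
    Continuous fun p : (ℕ → U) × X => encProc g p.1 n p.2 := by
  induction n with
  | zero => exact continuous_snd
  | succ n ih =>
    have hs : Continuous fun w : ℕ → U => shift w :=
      continuous_pi fun k => continuous_apply (k + 1)
    have h1 : Continuous fun p : (ℕ → U) × X => encProc g (shift p.1) n p.2 :=
      ih.comp ((hs.comp continuous_fst).prodMk continuous_snd)
    have h0 : Continuous fun p : (ℕ → U) × X => p.1 0 :=
      (continuous_apply 0).comp continuous_fst
    exact hg.comp (h0.prodMk h1)

theorem exists_pred [MetricSpace X] [CompactSpace X] [MetricSpace U]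
    (g : U → X → X) (hg : Continuous fun p : U × X => g p.1 p.2) (w : ℕ → U) (a : X)
    (ha : a ∈ enc g w) : ∃ b ∈ enc g (shift w), g (w 0) b = a := by
  have hc : ∀ n, Continuous (encProc g (shift w) n) := fun n =>
    (encProc_continuous g hg n).comp (Continuous.prodMk_right (shift w))
  have hcl : IsClosed {b | g (w 0) b = a} :=
    isClosed_eq (hg.comp (Continuous.prodMk_right (w 0))) continuous_const
  have hK : ∀ n, IsClosed (Set.range (encProc g (shift w) n) ∩ {b | g (w 0) b = a}) := fun n =>
    (isCompact_range (hc n)).isClosed.inter hcl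
  obtain ⟨b, hb⟩ := IsCompact.nonempty_iInter_of_sequence_nonempty_isCompact_isClosed
    (fun n => Set.range (encProc g (shift w) n) ∩ {b | g (w 0) b = a})
    (fun n => inter_subset_inter_left _ (range_encProc_antitone g (shift w) (Nat.le_succ n)))
    (fun n => by
      obtain ⟨x, hx⟩ := (mem_enc_iff g w a).1 ha (n + 1)
      exact ⟨encProc g (shift w) n x, ⟨x, rfl⟩, hx⟩)
    (hK 0).isCompact hK
  have hb' := mem_iInter.1 hb
  exact ⟨b, (mem_enc_iff _ _ _).2 fun n => (hb' n).1, (hb' 0).2⟩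

/-- Extension of a left-infinite input to a bi-infinite one. -/
def extIn (w : ℕ → U) : ℤ → U
  | Int.ofNat _ => w 0
  | Int.negSucc k => w k

/-- The solution built from a backward orbit. -/
def extSol (g : U → X → X) (w : ℕ → U) (b : ℕ → X) : ℤ → X
  | Int.ofNat n => (g (w 0))^[n] (b 0)
  | Int.negSucc k => b (k + 1)

theorem extSol_isSolution (g : U → X → X) (w : ℕ → U) (b : ℕ → X)
    (hb : ∀ k, g (w k) (b (k + 1)) = b k) : IsSolution g (extIn w) (extSol g w b) := by
  intro n
  match n with
  | Int.ofNat n => exact Function.iterate_succ_apply' (g (w 0)) n (b 0)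
  | Int.negSucc 0 => exact (hb 0).symm
  | Int.negSucc (k + 1) => exact (hb (k + 1)).symm

theorem exists_sol [MetricSpace X] [CompactSpace X] [MetricSpace U]
    (g : U → X → X) (hg : Continuous fun p : U × X => g p.1 p.2) (w : ℕ → U) (a : X)
    (ha : a ∈ enc g w) : ∃ x, IsSolution g (extIn w) x ∧ x 0 = a := by
  choose f hf1 hf2 using exists_pred g hg
  let step : {p : (ℕ → U) × X // p.2 ∈ enc g p.1} → {p : (ℕ → U) × X // p.2 ∈ enc g p.1} :=
    fun p => ⟨(shift p.1.1, f p.1.1 p.1.2 p.2), hf1 _ _ _⟩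
  let s : ℕ → {p : (ℕ → U) × X // p.2 ∈ enc g p.1} := fun k => step^[k] ⟨(w, a), ha⟩
  have hs : ∀ k, s (k + 1) = step (s k) := fun k => Function.iterate_succ_apply' step k _
  have hw : ∀ k j, (s k).1.1 j = w (j + k) := by
    intro k
    induction k with
    | zero => intro j; rfl
    | succ k ih =>
      intro j
      rw [hs]
      change (s k).1.1 (j + 1) = _
      rw [ih]; congr 1; omega
  refine ⟨extSol g w fun k => (s k).1.2, extSol_isSolution _ _ _ fun k => ?_, rfl⟩
  have h := hf2 (s k).1.1 (s k).1.2 (s k).2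
  rw [hw, Nat.zero_add] at h
  simp only [hs]
  exact h

theorem enc_subsingleton [MetricSpace X] [CompactSpace X] [MetricSpace U]
    (g : U → X → X) (hg : Continuous fun p : U × X => g p.1 p.2) (husp : USP g) (w : ℕ → U)
    (a b : X) (ha : a ∈ enc g w) (hb : b ∈ enc g w) : a = b := by
  obtain ⟨x, hx, rfl⟩ := exists_sol g hg w a ha
  obtain ⟨y, hy, rfl⟩ := exists_sol g hg w b hb
  rw [(husp (extIn w)).unique hx hy]

theorem enc_nonempty (g : U → X → X) (husp : USP g) (w : ℕ → U) : (enc g w).Nonempty := by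
  obtain ⟨x, hx, -⟩ := husp (extIn w)
  refine ⟨x 0, (mem_enc_iff _ _ _).2 fun n => ⟨x (-(n : ℤ)), ?_⟩⟩
  induction n with
  | zero => simp [encProc]
  | succ n ih =>
    rw [encProc_succ', ← ih]
    have h := hx (Int.negSucc n)
    rw [show Int.negSucc n + 1 = -(n : ℤ) by omega, show Int.negSucc n = -((n + 1 : ℕ) : ℤ) by omega] at h
    rw [h]
    rfl

theorem diam_small [MetricSpace X] [CompactSpace X] [MetricSpace U] [CompactSpace U]
    (g : U → X → X) (hg : Continuous fun p : U × X => g p.1 p.2) (husp : USP g)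
    (ε : ℝ) (hε : 0 < ε) : ∃ N : ℕ, ∀ (w : ℕ → U) (x y : X),
      dist (encProc g w N x) (encProc g w N y) < ε := by
  by_contra! hcon
  let F : ℕ → (ℕ → U) × X × X → (ℕ → U) × X × X := fun n p =>
    (p.1, encProc g p.1 n p.2.1, encProc g p.1 n p.2.2)
  have hF : ∀ n, Continuous (F n) := fun n => by
    have h := encProc_continuous g hg n
    exact continuous_fst.prodMk
      ((h.comp (continuous_fst.prodMk (continuous_fst.comp continuous_snd))).prodMk
        (h.comp (continuous_fst.prodMk (continuous_snd.comp continuous_snd))))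
  have hcl : IsClosed {p : (ℕ → U) × X × X | ε ≤ dist p.2.1 p.2.2} :=
    isClosed_le continuous_const (by fun_prop)
  have hK : ∀ n, IsClosed (Set.range (F n) ∩ {p : (ℕ → U) × X × X | ε ≤ dist p.2.1 p.2.2}) :=
    fun n => (isCompact_range (hF n)).isClosed.inter hcl
  obtain ⟨⟨w, a, b⟩, hb⟩ := IsCompact.nonempty_iInter_of_sequence_nonempty_isCompact_isClosed
    (fun n => Set.range (F n) ∩ {p : (ℕ → U) × X × X | ε ≤ dist p.2.1 p.2.2})
    (fun n => inter_subset_inter_left _ (by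
      rintro _ ⟨⟨w, x, y⟩, rfl⟩
      refine ⟨(w, g (w n) x, g (w n) y), ?_⟩
      simp only [F, encProc_succ']))
    (fun n => by
      obtain ⟨w, x, y, h⟩ := hcon n
      exact ⟨F n (w, x, y), ⟨_, rfl⟩, h⟩)
    (hK 0).isCompact hK
  have hb' := mem_iInter.1 hb
  have hmem : ∀ n, a ∈ Set.range (encProc g w n) ∧ b ∈ Set.range (encProc g w n) := by
    intro n
    obtain ⟨⟨w', x, y⟩, h⟩ := (hb' n).1
    simp only [F, Prod.mk.injEq] at h
    obtain ⟨rfl, rfl, rfl⟩ := h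
    exact ⟨⟨x, rfl⟩, ⟨y, rfl⟩⟩
  have hab := enc_subsingleton g hg husp w a b ((mem_enc_iff _ _ _).2 fun n => (hmem n).1)
    ((mem_enc_iff _ _ _).2 fun n => (hmem n).2)
  have h2 : ε ≤ dist a b := (hb' 0).2
  rw [hab, dist_self] at h2
  linarith

/-- under the USP, the finite-time encodings `E_n(←u) = φ_ū(0, -n, X)`
converge to `E(←u)` uniformly on `←U` in the Hausdorff metric. -/
theorem stmt_7 [MetricSpace X] [CompactSpace X] [MetricSpace U] [CompactSpace U]
    (g : U → X → X) (hg : Continuous fun p : U × X => g p.1 p.2)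
    (husp : USP g) :
    ∀ ε > (0 : ℝ), ∃ N : ℕ, ∀ (w : ℕ → U) (n : ℕ), N ≤ n →
      Metric.hausdorffDist (Set.range (encProc g w n)) (enc g w) < ε := by
  intro ε hε
  obtain ⟨N, hN⟩ := diam_small g hg husp (ε / 2) (half_pos hε)
  refine ⟨N, fun w n hn => ?_⟩
  have hd : ∀ a ∈ Set.range (encProc g w n), ∀ b ∈ Set.range (encProc g w n),
      dist a b ≤ ε / 2 := by
    intro a ha b hb
    obtain ⟨x, rfl⟩ := range_encProc_antitone g w hn ha
    obtain ⟨y, rfl⟩ := range_encProc_antitone g w hn hb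
    exact (hN w x y).le
  obtain ⟨c, hc⟩ := enc_nonempty g husp w
  refine lt_of_le_of_lt (Metric.hausdorffDist_le_of_mem_dist (half_pos hε).le ?_ ?_)
    (half_lt_self hε)
  · intro a ha
    exact ⟨c, hc, hd a ha c ((mem_enc_iff _ _ _).1 hc n)⟩
  · intro a ha
    have h := (mem_enc_iff _ _ _).1 ha n
    exact ⟨a, h, hd a h a h⟩
end

section
/- Let g be a compactly driven system with the USP, so that for every ←u ∈ ←U the set E(←u) is a singleton {h(←u)}, which defines a map h : ←U → X. Then h maps ←U onto X_U, h is continuous, and g(v, h(←u)) = h(σ_v(←u)) for all v ∈ U and all ←u ∈ ←U; that is, h is a universal semi-conjugacy. -/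
open Metric Set Filter Topology Function

universe u' v'

variable {U : Type u'} {X : Type v'}

theorem aux_proc (g : U → X → X) (u : ℤ → U) (j : ℕ) (n : ℤ) (x : X) :
    proc g u j (n - j) x = encProc g (leftOf u n) j x := by
  induction j generalizing n with
  | zero => rfl
  | succ j ih =>
    have h1 : shift (leftOf u n) = leftOf u (n - 1) := by
      funext k
      simp only [shift, leftOf]
      congr 1
      push_cast
      ring
    have h2 : n - ((j + 1 : ℕ) : ℤ) = n - 1 - j := by push_cast; ring
    have h3 : n - 1 - (j : ℤ) + j = n - 1 - ((0 : ℕ) : ℤ) := by push_cast; ring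
    rw [h2]
    simp only [proc, encProc]
    rw [h1, ih, h3]
    rfl

theorem aux_reach (g : U → X → X) (u : ℤ → U) (n : ℤ) :
    reach g u n = enc g (leftOf u n) := by
  unfold reach enc
  refine iInter_congr fun j => ?_
  congr 1
  funext x
  rw [← aux_proc]
  push_cast
  rfl

theorem aux_left (w : ℕ → U) : leftOf (fun i : ℤ => w (-1 - i).toNat) 0 = w := by
  funext k
  simp only [leftOf]
  congr 1
  omega

theorem aux_cont [TopologicalSpace X] [TopologicalSpace U]
    (g : U → X → X) (hg : Continuous fun p : U × X => g p.1 p.2) (j : ℕ) :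
    Continuous fun p : (ℕ → U) × X => encProc g p.1 j p.2 := by
  induction j with
  | zero => exact continuous_snd
  | succ j ih =>
    have hs : Continuous fun p : (ℕ → U) × X => (shift p.1, p.2) := by
      unfold shift
      fun_prop
    have h0 : Continuous fun p : (ℕ → U) × X => p.1 0 := by fun_prop
    exact hg.comp (h0.prodMk (ih.comp hs))

/-- under the USP, the map `h` defined by `E(←u) = {h(←u)}` is a universal
semi-conjugacy: it maps `←U` onto `X_U`, is continuous, and `g(v, h(←u)) = h(σ_v(←u))`. -/
theorem stmt_9 [MetricSpace X] [CompactSpace X] [MetricSpace U] [CompactSpace U]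
    (g : U → X → X) (hg : Continuous fun p : U × X => g p.1 p.2)
    (husp : USP g) (h : (ℕ → U) → X) (hh : ∀ w : ℕ → U, enc g w = {h w}) :
    Set.range h = reachSet g ∧ Continuous h ∧
      ∀ (v : U) (w : ℕ → U), g v (h w) = h (append v w) := by
  have hmem : ∀ w x, x ∈ enc g w ↔ x = h w := fun w x => by rw [hh]; rfl
  refine ⟨?_, ?_, ?_⟩
  · ext x
    simp only [reachSet, mem_iUnion, aux_reach, hmem, mem_range]
    constructor
    · rintro ⟨w, rfl⟩
      exact ⟨fun i : ℤ => w (-1 - i).toNat, 0, by rw [aux_left]⟩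
    · rintro ⟨u, n, rfl⟩
      exact ⟨_, rfl⟩
  · suffices hcl : IsClosed {p : (ℕ → U) × X | p.2 = h p.1} by
      refine continuous_iff_isClosed.2 fun C hC => ?_
      have hC' : h ⁻¹' C = Prod.fst '' ({p : (ℕ → U) × X | p.2 = h p.1} ∩ Prod.snd ⁻¹' C) := by
        ext w
        simp
      rw [hC']
      exact isClosedMap_fst_of_compactSpace _ (hcl.inter (hC.preimage continuous_snd))
    have : {p : (ℕ → U) × X | p.2 = h p.1} =
        ⋂ j : ℕ, Prod.fst '' {q : ((ℕ → U) × X) × X | encProc g q.1.1 (j + 1) q.2 = q.1.2} := by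
      ext ⟨w, x⟩
      simp [← hmem, enc]
    rw [this]
    refine isClosed_iInter fun j => isClosedMap_fst_of_compactSpace _ ?_
    refine isClosed_eq ?_ (by fun_prop)
    exact (aux_cont g hg (j + 1)).comp
      (f := fun q : ((ℕ → U) × X) × X => (q.1.1, q.2)) (by fun_prop)
  · intro v w
    rw [← hmem]
    refine mem_iInter.2 fun j => ?_
    have hw : h w ∈ enc g w := (hmem _ _).2 rfl
    cases j with
    | zero => exact ⟨h w, rfl⟩
    | succ j =>
      obtain ⟨y, hy⟩ := mem_iInter.1 hw j
      exact ⟨y, congrArg (g v) hy⟩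
end

section
/- Let g be a compactly driven system. Suppose H : ←U → (X_U)^{ℤ<0} is continuous (product topologies), its first coordinate map θ_1 = π_{−1} ∘ H is surjective onto X_U, and g̃_v ∘ H = H ∘ σ_v for every v ∈ U. Then g has the USP; moreover, writing E(←u) = {h(←u)}, the coordinates of H satisfy π_{−k} ∘ H = h ∘ r^{k−1} for every k ≥ 1, so that H(←u) = (…, h(r←u), h(←u)). -/
open Metric Set Filter Topology Function

universe u' v'

variable {U : Type u'} {X : Type v'}

theorem shift_leftOf (u : ℤ → U) (n : ℤ) : shift (leftOf u n) = leftOf u (n - 1) := by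
  funext k
  simp only [shift, leftOf]
  congr 1
  push_cast
  ring

theorem append_leftOf (u : ℤ → U) (n : ℤ) : append (u n) (leftOf u n) = leftOf u (n + 1) := by
  funext k
  cases k with
  | zero => simp [append, leftOf]
  | succ k =>
    simp only [append, leftOf]
    congr 1
    push_cast
    ring

theorem append_shift (w : ℕ → U) : append (w 0) (shift w) = w := by
  funext k
  cases k <;> rfl

theorem proc_eq_encProc (g : U → X → X) (u : ℤ → U) (j : ℕ) :
    ∀ (n : ℤ) (x : X), proc g u j (n - j) x = encProc g (leftOf u n) j x := by
  induction j with
  | zero => intro n x; rfl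
  | succ j ih =>
    intro n x
    have h := ih (n - 1) x
    rw [proc, encProc, shift_leftOf, ← h]
    have e1 : n - ((j + 1 : ℕ) : ℤ) = n - 1 - j := by push_cast; ring
    have e2 : n - 1 - (j : ℤ) + j = n - 1 := by ring
    rw [e1, e2]
    simp [leftOf]

theorem enc_leftOf (g : U → X → X) (u : ℤ → U) (n : ℤ) :
    enc g (leftOf u n) = reach g u n := by
  unfold enc reach
  congr 1
  funext j
  congr 1
  funext x
  have := proc_eq_encProc g u (j + 1) n x
  push_cast at this
  exact this.symm

theorem enc_subset (g : U → X → X) (w : ℕ → U) : enc g w ⊆ reachSet g := by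
  intro x hx
  have h : leftOf (fun n : ℤ => w (-1 - n).toNat) 0 = w := by
    funext k
    simp only [leftOf]
    congr 1
    omega
  rw [← h, enc_leftOf] at hx
  exact mem_iUnion.2 ⟨_, mem_iUnion.2 ⟨0, hx⟩⟩

theorem encProc_succ_range (g : U → X → X) (j : ℕ) : ∀ (w : ℕ → U) (x : X),
    ∃ y, encProc g w (j + 1) x = encProc g w j y := by
  induction j with
  | zero => intro w x; exact ⟨g (w 0) x, rfl⟩
  | succ j ih =>
    intro w x
    obtain ⟨y, hy⟩ := ih (shift w) x
    exact ⟨y, by rw [encProc, hy]; rfl⟩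

theorem encProc_continuous_s12 [TopologicalSpace X] (g : U → X → X)
    (hg : ∀ v, Continuous (g v)) (j : ℕ) : ∀ w, Continuous (encProc g w j) := by
  induction j with
  | zero => intro w; exact continuous_id
  | succ j ih => intro w; exact (hg _).comp (ih (shift w))

theorem enc_step [MetricSpace X] [CompactSpace X] (g : U → X → X)
    (hg : ∀ v, Continuous (g v)) (w : ℕ → U) (x : X) (hx : x ∈ enc g w) :
    ∃ y ∈ enc g (shift w), g (w 0) y = x := by
  have hcl : ∀ j, IsClosed (g (w 0) ⁻¹' {x} ∩ range (encProc g (shift w) (j + 1))) := fun j =>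
    (isClosed_singleton.preimage (hg _)).inter
      (isCompact_range (encProc_continuous_s12 g hg _ _)).isClosed
  obtain ⟨y, hy⟩ := IsCompact.nonempty_iInter_of_sequence_nonempty_isCompact_isClosed
    (fun j : ℕ => g (w 0) ⁻¹' {x} ∩ range (encProc g (shift w) (j + 1)))
    (by
      rintro j y ⟨h1, z, rfl⟩
      obtain ⟨z', hz'⟩ := encProc_succ_range g (j + 1) (shift w) z
      exact ⟨h1, z', hz'.symm⟩)
    (by
      intro j
      obtain ⟨z, hz⟩ := mem_iInter.1 hx (j + 1)
      exact ⟨_, hz, z, rfl⟩)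
    (hcl 0).isCompact hcl
  rw [mem_iInter] at hy
  exact ⟨y, mem_iInter.2 fun j => (hy j).2, (hy 0).1⟩

/-- Every point of the encoding is the image of a point of the range of `θ` along a
left-infinite input agreeing with `w` on the `j` most recent entries. -/
theorem enc_approx [MetricSpace X] [CompactSpace X] (g : U → X → X)
    (hg : ∀ v, Continuous (g v)) (θ : (ℕ → U) → X) (hθ : reachSet g ⊆ range θ)
    (hc : ∀ v w, θ (append v w) = g v (θ w)) (j : ℕ) :
    ∀ (w : ℕ → U) (x : X), x ∈ enc g w → ∃ z : ℕ → U, (∀ k < j, z k = w k) ∧ θ z = x := by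
  induction j with
  | zero =>
    intro w x hx
    obtain ⟨z, hz⟩ := hθ (enc_subset g w hx)
    exact ⟨z, by simp, hz⟩
  | succ j ih =>
    intro w x hx
    obtain ⟨y, hy, rfl⟩ := enc_step g hg w x hx
    obtain ⟨z, hz, rfl⟩ := ih _ _ hy
    refine ⟨append (w 0) z, ?_, hc _ _⟩
    intro k hk
    cases k with
    | zero => rfl
    | succ k => exact hz k (by omega)

theorem enc_mem (g : U → X → X) (θ : (ℕ → U) → X)
    (hc : ∀ v w, θ (append v w) = g v (θ w)) (j : ℕ) :
    ∀ w, ∃ y, encProc g w j y = θ w := by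
  induction j with
  | zero => intro w; exact ⟨_, rfl⟩
  | succ j ih =>
    intro w
    obtain ⟨y, hy⟩ := ih (shift w)
    exact ⟨y, by rw [encProc, hy, ← hc, append_shift]⟩

theorem sol_mem (g : U → X → X) (u : ℤ → U) (x : ℤ → X) (hx : IsSolution g u x) (j : ℕ) :
    ∀ n : ℤ, encProc g (leftOf u n) j (x (n - j)) = x n := by
  induction j with
  | zero => intro n; simp [encProc]
  | succ j ih =>
    intro n
    have h := ih (n - 1)
    have e1 : n - ((j + 1 : ℕ) : ℤ) = n - 1 - j := by push_cast; ring
    rw [encProc, shift_leftOf, e1, h]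
    have := hx (n - 1)
    simp only [sub_add_cancel] at this
    rw [this]
    simp [leftOf]

/-- if `H : ←U → (X_U)^{ℤ<0}` is continuous, its first coordinate map is
surjective onto `X_U`, and `g̃_v ∘ H = H ∘ σ_v` for every `v`, then `g` has the USP and
the coordinates of `H` satisfy `π_{-k} ∘ H = h ∘ r^{k-1}` where `E(←u) = {h(←u)}`. -/
theorem stmt_12 [MetricSpace X] [CompactSpace X] [MetricSpace U] [CompactSpace U]
    (g : U → X → X) (hg : Continuous fun p : U × X => g p.1 p.2)
    (H : (ℕ → U) → ℕ → X) (hcont : Continuous H)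
    (hrange : ∀ (w : ℕ → U) (k : ℕ), H w k ∈ reachSet g)
    (hsurj : Set.range (fun w => H w 0) = reachSet g)
    (hcomm : ∀ v : U, tildeg g v ∘ H = H ∘ append v) :
    USP g ∧
      ∃ h : (ℕ → U) → X, (∀ w : ℕ → U, enc g w = {h w}) ∧
        ∀ (w : ℕ → U) (k : ℕ), H w k = h (shift^[k] w) := by
  have hgv : ∀ v, Continuous (g v) := fun v => hg.comp (Continuous.prodMk_right v)
  have hc : ∀ v w, H (append v w) 0 = g v (H w 0) := fun v w =>
    (congrFun (congrFun (hcomm v) w) 0).symm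
  have hs : ∀ v w k, H (append v w) (k + 1) = H w k := fun v w k =>
    (congrFun (congrFun (hcomm v) w) (k + 1)).symm
  have hθc : Continuous fun w => H w 0 := (continuous_apply 0).comp hcont
  have henc : ∀ w, enc g w = {H w 0} := by
    intro w
    apply Subset.antisymm
    · intro x hx
      choose z hz hzx using fun j =>
        enc_approx g hgv (fun w => H w 0) hsurj.ge hc j w x hx
      have hlim : Tendsto z atTop (𝓝 w) := by
        rw [tendsto_pi_nhds]
        intro k
        apply tendsto_const_nhds.congr'
        filter_upwards [eventually_gt_atTop k] with j hj
        exact (hz j k hj).symm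
      have h2 := (hθc.tendsto w).comp hlim
      have h3 : ((fun w => H w 0) ∘ z) = fun _ => x := funext hzx
      rw [h3] at h2
      exact tendsto_nhds_unique tendsto_const_nhds h2
    · rintro _ rfl
      exact mem_iInter.2 fun j => enc_mem g (fun w => H w 0) hc (j + 1) w
  refine ⟨?_, fun w => H w 0, henc, ?_⟩
  · intro u
    refine ⟨fun n => H (leftOf u n) 0, ?_, ?_⟩
    · intro n
      simp only [← append_leftOf, hc]
    · intro y hy
      funext n
      have hmem : y n ∈ enc g (leftOf u n) :=
        mem_iInter.2 fun j => ⟨_, sol_mem g u y hy (j + 1) n⟩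
      rw [henc] at hmem
      exact hmem
  · intro w k
    induction k generalizing w with
    | zero => rfl
    | succ k ih =>
      rw [iterate_succ_apply, ← ih (shift w), ← hs (w 0) (shift w), append_shift]
end
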